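/- arXiv:1812.04413 — 2 statements merged into one kernel-verified Lean document; each statement's English description precedes it below -/
import Mathlib

section
/- The logic K4(⋄≥, ⟟) has the local finite model property: if a formula φ of the modal language (⋄≥, ⟟) is satisfied at some world of some Kripke structure whose accessibility relation is transitive, then φ is satisfied at some world of some Kripke structure with a finite universe whose accessibility relation is transitive. -/
/-- Formulas of the modal language `(⋄≥, ⟟)`: propositional variables, Boolean
connectives (¬, ∧ suffice), graded forward modalities `⋄≥ₙ`, and the basic
converse modality `⟟`. -/
inductive MF : Type where
  | var  : ℕ → MF
  | neg  : MF → MF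
  | and  : MF → MF → MF
  | dia  : ℕ → MF → MF   -- `dia n φ` is `⋄≥ₙ φ`
  | conv : MF → MF       -- `conv φ` is `⟟φ`

/-- Satisfaction in a Kripke structure `(W, R, V)`.  `⋄≥ₙ φ` holds at `w` iff at
least `n` worlds `v` satisfy `R w v` and `φ`; `⟟φ` holds at `w` iff some
`R`-predecessor of `w` satisfies `φ`. -/
def Sat {W : Type u} (R : W → W → Prop) (V : ℕ → Set W) : MF → W → Prop
  | .var p, w => w ∈ V p
  | .neg φ, w => ¬ Sat R V φ w
  | .and φ ψ, w => Sat R V φ w ∧ Sat R V ψ w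
  | .dia n φ, w => ∃ s : Finset W, n ≤ s.card ∧ ∀ v ∈ s, R w v ∧ Sat R V φ v
  | .conv φ, w => ∃ v : W, R v w ∧ Sat R V φ v

universe v

/-!
Label every world by the set of subformulas of `φ` true there, and let `N` exceed all grades in `φ`.
A label is rare at `x` if fewer than `N` successors of `x` carry it.  By transitivity rarity grows
along `R`, so only boundedly many worlds can be reached from `x` by repeatedly stepping to a
successor whose label is rare at the current world.  These reachable worlds can therefore be named
injectively by finitely many names, and `x` is described up to isomorphism by a finite code: the
named graph of its rare successors, decorated with labels.  Finitely many codes occur, and they are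
the worlds of the finite model.  Rare labels keep their exact number of successors, because distinct
rare successors have distinct names; every other label has at least `N` successors on both sides.
-/

namespace K4LocalFMP

open Relation Set

section Cardinality

lemma encard_biUnion_le_mul {ι α : Type*} (I : Set ι) (A : ι → Set α) (m : ℕ∞)
    (hA : ∀ i ∈ I, (A i).encard ≤ m) : (⋃ i ∈ I, A i).encard ≤ I.encard * m := by
  rcases I.finite_or_infinite with hI | hI
  · lift I to Finset ι using hI
    calc (⋃ i ∈ I, A i).encard
        ≤ ∑ i ∈ I, (A i).encard := I.set_encard_biUnion_le A
      _ ≤ I.card • m := Finset.sum_le_card_nsmul I _ m hA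
      _ = (I : Set ι).encard * m := by rw [nsmul_eq_mul, encard_coe_eq_coe_finsetCard]
  · rcases eq_or_ne m 0 with rfl | hm
    · have hempty : ⋃ i ∈ I, A i = ∅ := by simpa using hA
      simp [hempty]
    · rw [hI.encard_eq, ENat.top_mul hm]
      exact le_top

lemma natCast_le_encard_iff_exists_finset {α : Type*} {A : Set α} {n : ℕ} :
    (n : ℕ∞) ≤ A.encard ↔ ∃ s : Finset α, n ≤ s.card ∧ ∀ a ∈ s, a ∈ A := by
  constructor
  · intro h
    obtain ⟨s, hsA, hs⟩ := exists_subset_encard_eq h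
    lift s to Finset α using finite_of_encard_eq_coe hs
    rw [encard_coe_eq_coe_finsetCard, Nat.cast_inj] at hs
    exact ⟨s, hs.ge, hsA⟩
  · rintro ⟨s, hn, hsA⟩
    calc (n : ℕ∞) ≤ s.card := Nat.cast_le.2 hn
      _ = (s : Set α).encard := (encard_coe_eq_coe_finsetCard s).symm
      _ ≤ A.encard := encard_le_encard hsA

lemma exists_injOn_eqOn_of_subset {α K : Type*} [Nonempty K] {ν : α → K} {A X : Set α}
    (hν : InjOn ν A) (hAX : A ⊆ X) (hX : X.Finite) (hcard : X.encard ≤ ENat.card K) :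
    ∃ μ : α → K, InjOn μ X ∧ EqOn μ ν A := by
  classical
  have hrest : (X \ A).encard ≤ (ν '' A)ᶜ.encard := by
    refine (ENat.add_le_add_iff_left (hX.subset hAX).encard_lt_top.ne).1 ?_
    calc A.encard + (X \ A).encard = X.encard := by
          rw [add_comm, encard_sdiff_add_encard_of_subset hAX]
      _ ≤ (univ : Set K).encard := by rwa [encard_univ]
      _ = A.encard + (ν '' A)ᶜ.encard := by
          rw [← encard_add_encard_compl (ν '' A), hν.encard_image]
  obtain ⟨g, hgmaps, hg⟩ := hX.sdiff.exists_injOn_of_encard_le hrest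
  have hμA : EqOn (A.piecewise ν g) ν A := A.piecewise_eqOn ν g
  have hμrest : EqOn (A.piecewise ν g) g (X \ A) := (A.piecewise_eqOn_compl ν g).mono fun _ h => h.2
  refine ⟨A.piecewise ν g, ?_, hμA⟩
  rw [← union_sdiff_cancel hAX, injOn_union disjoint_sdiff_right]
  refine ⟨hν.congr hμA.symm, hg.congr hμrest.symm, fun a ha b hb hab => ?_⟩
  rw [hμA ha, hμrest hb] at hab
  exact hgmaps hb ⟨a, ha, hab⟩

end Cardinality

section Reach

variable {W : Type*} (S : W → W → Prop)

/-- The set of points reachable from `x` in finitely many `S`-steps, including `x` itself. -/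
def reach (x : W) : Set W := {y | ReflTransGen S x y}

variable {S}

lemma mem_reach_self (x : W) : x ∈ reach S x := ReflTransGen.refl

lemma mem_reach_of_rel {x y : W} (h : S x y) : y ∈ reach S x := ReflTransGen.single h

lemma reach_subset_of_mem {x y : W} (h : y ∈ reach S x) : reach S y ⊆ reach S x :=
  fun _ hz => ReflTransGen.trans h hz

lemma reach_subset_of_rank {ρ : W → ℕ}
    (hS : ∀ x y z, S x y → ρ x ≤ ρ y → S y z → S x z) (x : W) :
    reach S x ⊆ insert x {y | S x y} ∪ ⋃ y ∈ {y | S x y}, {z ∈ reach S y | ρ y < ρ x} := by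
  intro z hz
  induction hz with
  | refl => exact .inl (.inl rfl)
  | @tail y z _ hyz ih =>
    rcases ih with (rfl | hxy) | hy
    · exact .inl (.inr hyz)
    · rcases le_or_gt (ρ x) (ρ y) with hρ | hρ
      · exact .inl (.inr (hS x y z hxy hρ hyz))
      · exact .inr (mem_biUnion hxy ⟨mem_reach_of_rel hyz, hρ⟩)
    · simp only [mem_iUnion] at hy
      obtain ⟨s, hxs, hsy, hρ⟩ := hy
      exact .inr (mem_biUnion hxs ⟨ReflTransGen.tail hsy hyz, hρ⟩)

lemma exists_encard_reach_le {b : ℕ} {ρ : W → ℕ} (hb : ∀ x, {y | S x y}.encard ≤ b)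
    (hS : ∀ x y z, S x y → ρ x ≤ ρ y → S y z → S x z) (k : ℕ) :
    ∃ M : ℕ, ∀ x, ρ x < k → (reach S x).encard ≤ M := by
  induction k with
  | zero => exact ⟨0, fun x hx => absurd hx (Nat.not_lt_zero _)⟩
  | succ k ih =>
    obtain ⟨M, hM⟩ := ih
    refine ⟨b + 1 + b * M, fun x hx => ?_⟩
    have hlower : ∀ y ∈ {y | S x y}, {z ∈ reach S y | ρ y < ρ x}.encard ≤ M := by
      intro y _
      by_cases hρ : ρ y < ρ x
      · exact (encard_le_encard (sep_subset _ _)).trans (hM y (by omega))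
      · simp [hρ]
    calc (reach S x).encard
        ≤ (insert x {y | S x y}).encard
            + (⋃ y ∈ {y | S x y}, {z ∈ reach S y | ρ y < ρ x}).encard :=
          (encard_le_encard (reach_subset_of_rank hS x)).trans (encard_union_le _ _)
      _ ≤ ({y | S x y}.encard + 1) + {y | S x y}.encard * M :=
          add_le_add (encard_insert_le _ _) (encard_biUnion_le_mul _ _ _ hlower)
      _ ≤ ((b + 1 + b * M : ℕ) : ℕ∞) := by
          push_cast
          gcongr <;> exact hb x

end Reach

section Code

/-- The type of local descriptions of a vertex: its name, its datum and the names of its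
successors. -/
abbrev Entry (K E : Type*) : Type _ := K × E × Set K

variable {W K E : Type*} (S : W → W → Prop) (e : W → E)

/-- The local description of `x` in the graph `S` with vertex data `e` and vertex names `ν`. -/
def entry (ν : W → K) (x : W) : Entry K E := (ν x, e x, ν '' {y | S x y})

/-- The pointed named graph reachable from `x`, encoded by the entry of the root `x` and the set of
the entries of all reachable vertices.  When `ν` is injective on `reach S x` it determines that
graph up to isomorphism. -/
def code (ν : W → K) (x : W) : Entry K E × Set (Entry K E) :=
  (entry S e ν x, entry S e ν '' reach S x)

variable {S e} {ν μ : W → K} {x y : W}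

lemma code_congr (h : EqOn ν μ (reach S x)) : code S e ν x = code S e μ x := by
  have hentry : EqOn (entry S e ν) (entry S e μ) (reach S x) := fun y hy => by
    have hsucc : EqOn ν μ {z | S y z} :=
      h.mono fun z hz => reach_subset_of_mem hy (mem_reach_of_rel hz)
    simp only [entry, h hy, hsucc.image_eq]
  exact Prod.ext (hentry (mem_reach_self x)) hentry.image_eq

lemma entry_eq_of_code_eq (hμ : InjOn μ (reach S y)) (h : code S e ν x = code S e μ y)
    {u v : W} (hu : u ∈ reach S x) (hv : v ∈ reach S y) (huv : ν u = μ v) :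
    entry S e ν u = entry S e μ v := by
  have himage : entry S e ν '' reach S x = entry S e μ '' reach S y := congrArg Prod.snd h
  obtain ⟨w, hw, hwu⟩ := himage.subset (mem_image_of_mem _ hu)
  have hname : μ w = ν u := congrArg Prod.fst hwu
  rw [← hwu, hμ hw hv (hname.trans huv)]

lemma image_entry_reach_subset_of_code_eq (hμ : InjOn μ (reach S y))
    (h : code S e ν x = code S e μ y) {u v : W} (hu : u ∈ reach S x) (hv : v ∈ reach S y)
    (huv : ν u = μ v) : entry S e ν '' reach S u ⊆ entry S e μ '' reach S v := by
  rintro _ ⟨w, hw, rfl⟩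
  induction hw with
  | refl => exact ⟨v, mem_reach_self v, (entry_eq_of_code_eq hμ h hu hv huv).symm⟩
  | @tail a b ha hab ih =>
    obtain ⟨a', ha', haa'⟩ := ih
    have hsucc : ν '' {z | S a z} = μ '' {z | S a' z} := congrArg (·.2.2) haa'.symm
    obtain ⟨b', hab', hbb'⟩ := hsucc.subset (mem_image_of_mem ν hab)
    have hb' : b' ∈ reach S v := ReflTransGen.tail ha' hab'
    exact ⟨b', hb', (entry_eq_of_code_eq hμ h (reach_subset_of_mem hu (ReflTransGen.tail ha hab))
      (reach_subset_of_mem hv hb') hbb'.symm).symm⟩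

lemma code_eq_of_mem_reach (hν : InjOn ν (reach S x)) (hμ : InjOn μ (reach S y))
    (h : code S e ν x = code S e μ y) {u v : W} (hu : u ∈ reach S x) (hv : v ∈ reach S y)
    (huv : ν u = μ v) : code S e ν u = code S e μ v :=
  Prod.ext (entry_eq_of_code_eq hμ h hu hv huv)
    ((image_entry_reach_subset_of_code_eq hμ h hu hv huv).antisymm
      (image_entry_reach_subset_of_code_eq hν h.symm hv hu huv.symm))

lemma image_code_reach_subset_of_code_eq (hν : InjOn ν (reach S x)) (hμ : InjOn μ (reach S y))
    (h : code S e ν x = code S e μ y) :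
    code S e ν '' reach S x ⊆ code S e μ '' reach S y := by
  have himage : entry S e ν '' reach S x = entry S e μ '' reach S y := congrArg Prod.snd h
  rintro _ ⟨u, hu, rfl⟩
  obtain ⟨v, hv, hvu⟩ := himage.subset (mem_image_of_mem _ hu)
  exact ⟨v, hv, (code_eq_of_mem_reach hν hμ h hu hv (congrArg Prod.fst hvu).symm).symm⟩

lemma image_code_succ_subset_of_code_eq (hν : InjOn ν (reach S x)) (hμ : InjOn μ (reach S y))
    (h : code S e ν x = code S e μ y) :
    code S e ν '' {z | S x z} ⊆ code S e μ '' {z | S y z} := by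
  have hsucc : ν '' {z | S x z} = μ '' {z | S y z} := congrArg (·.1.2.2) h
  rintro _ ⟨u, hu, rfl⟩
  obtain ⟨v, hv, hvu⟩ := hsucc.subset (mem_image_of_mem ν hu)
  exact ⟨v, hv,
    (code_eq_of_mem_reach hν hμ h (mem_reach_of_rel hu) (mem_reach_of_rel hv) hvu.symm).symm⟩

end Code

section RareLabels

variable {W T : Type*} (R : W → W → Prop) (t : W → T) (N : ℕ)

/-- The labels carried by fewer than `N` successors of `x`, possibly by none. -/
def rare (x : W) : Set T := {l | {v | R x v ∧ t v = l}.encard < N}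

/-- `RareSucc R t N x v` says that `v` is a successor of `x` whose label is rare at `x`. -/
def RareSucc (x v : W) : Prop := R x v ∧ t v ∈ rare R t N x

/-- The labels of the predecessors of `x`. -/
def predLabels (x : W) : Set T := t '' {z | R z x}

variable {R t N}

lemma rare_subset_of_rel [IsTrans W R] {x y : W} (h : R x y) : rare R t N x ⊆ rare R t N y := by
  intro l hl
  have hsub : {v | R y v ∧ t v = l} ⊆ {v | R x v ∧ t v = l} :=
    fun _ hv => ⟨_root_.trans h hv.1, hv.2⟩
  exact (encard_le_encard hsub).trans_lt hl

lemma le_encard_succ_of_not_subset_rare {x : W} {Q : Set T} (hQ : ¬ Q ⊆ rare R t N x) :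
    N ≤ {v | R x v ∧ t v ∈ Q}.encard := by
  obtain ⟨l, hlQ, hl⟩ := not_subset.1 hQ
  exact (not_lt.1 hl).trans (encard_le_encard fun v hv => ⟨hv.1, hv.2 ▸ hlQ⟩)

lemma predLabels_subset_of_rel [IsTrans W R] {x y : W} (h : R x y) :
    predLabels R t x ⊆ predLabels R t y :=
  image_mono fun _ hz => _root_.trans hz h

lemma encard_rareSucc_le [Finite T] (x : W) :
    {v | RareSucc R t N x v}.encard ≤ (Nat.card T * N : ℕ) := by
  have hcover : {v | RareSucc R t N x v} ⊆ ⋃ l ∈ rare R t N x, {v | R x v ∧ t v = l} :=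
    fun v hv => mem_biUnion hv.2 ⟨hv.1, rfl⟩
  calc {v | RareSucc R t N x v}.encard
      ≤ (rare R t N x).encard * N :=
        (encard_le_encard hcover).trans (encard_biUnion_le_mul _ _ _ fun _ hl => hl.le)
    _ ≤ (Nat.card T * N : ℕ) := by
        rw [Nat.cast_mul, ← ENat.card_eq_coe_natCard]
        gcongr
        exact encard_le_card

lemma rareSucc_trans_of_ncard_le [Finite T] [IsTrans W R] {x y z : W} (hxy : RareSucc R t N x y)
    (hcard : (rare R t N x)ᶜ.ncard ≤ (rare R t N y)ᶜ.ncard) (hyz : RareSucc R t N y z) :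
    RareSucc R t N x z := by
  have hcompl : (rare R t N y)ᶜ = (rare R t N x)ᶜ :=
    eq_of_subset_of_ncard_le (compl_subset_compl.2 (rare_subset_of_rel hxy.1)) hcard
  exact ⟨_root_.trans hxy.1 hyz.1, compl_injective hcompl ▸ hyz.2⟩

lemma exists_encard_reach_rareSucc_le [Finite T] [IsTrans W R] :
    ∃ M : ℕ, ∀ x : W, (reach (RareSucc R t N) x).encard ≤ M := by
  obtain ⟨M, hM⟩ := exists_encard_reach_le encard_rareSucc_le
    (fun _ _ _ => rareSucc_trans_of_ncard_le (R := R) (t := t) (N := N)) (Nat.card T + 1)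
  exact ⟨M, fun x => hM x (Nat.lt_succ_of_le (ncard_le_card _))⟩

lemma rel_of_mem_reach_rareSucc [IsTrans W R] {x y z : W} (hxy : R x y)
    (hyz : z ∈ reach (RareSucc R t N) y) : R x z := by
  induction hyz with
  | refl => exact hxy
  | tail _ hstep ih => exact _root_.trans ih hstep.1

end RareLabels

section NamedWorlds

variable {W T : Type*} (R : W → W → Prop) (t : W → T) (N : ℕ) {K : Type*}

/-- The label information on `x` recorded in codes: its label, the labels of its predecessors and
the labels rare at `x`. -/
def labelData (x : W) : T × Set T × Set T := (t x, predLabels R t x, rare R t N x)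

/-- The code of `x` in the graph of rare successors, decorated with label information. -/
abbrev rareCode (ν : W → K) (x : W) :
    Entry K (T × Set T × Set T) × Set (Entry K (T × Set T × Set T)) :=
  code (RareSucc R t N) (labelData R t N) ν x

/-- A world together with a naming of all worlds that is injective on what the given world reaches
through rare successors. -/
structure NamedWorld (K : Type*) where
  name : W → K
  world : W
  injOn_name : InjOn name (reach (RareSucc R t N) world)

variable {R t N}

lemma label_eq_of_rareCode_eq {ν μ : W → K} {x y : W}
    (h : rareCode R t N ν x = rareCode R t N μ y) : t x = t y :=
  congrArg (·.1.2.1.1) h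

lemma predLabels_eq_of_rareCode_eq {ν μ : W → K} {x y : W}
    (h : rareCode R t N ν x = rareCode R t N μ y) : predLabels R t x = predLabels R t y :=
  congrArg (·.1.2.1.2.1) h

lemma rare_eq_of_rareCode_eq {ν μ : W → K} {x y : W}
    (h : rareCode R t N ν x = rareCode R t N μ y) : rare R t N x = rare R t N y :=
  congrArg (·.1.2.1.2.2) h

namespace NamedWorld

/-- The code of the world of `p` under the naming of `p`. -/
def code (p : NamedWorld R t N K) :
    Entry K (T × Set T × Set T) × Set (Entry K (T × Set T × Set T)) :=
  rareCode R t N p.name p.world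

/-- The accessibility relation of the finite model, on named worlds representing codes.  It is
defined so as to be transitive, to depend on codes only, and to hold for worlds related by `R` that
carry the same naming. -/
structure Rel (p q : NamedWorld R t N K) : Prop where
  label_mem : t p.world ∈ predLabels R t q.world
  predLabels_subset : predLabels R t p.world ⊆ predLabels R t q.world
  rare_subset : rare R t N p.world ⊆ rare R t N q.world
  rareCode_mem : ∀ z ∈ reach (RareSucc R t N) q.world, t z ∈ rare R t N p.world →
    rareCode R t N q.name z ∈ rareCode R t N p.name '' {v | RareSucc R t N p.world v}

lemma Rel.trans {p q r : NamedWorld R t N K} (hpq : p.Rel q) (hqr : q.Rel r) : p.Rel r where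
  label_mem := hqr.predLabels_subset hpq.label_mem
  predLabels_subset := hpq.predLabels_subset.trans hqr.predLabels_subset
  rare_subset := hpq.rare_subset.trans hqr.rare_subset
  rareCode_mem z hz hrare := by
    obtain ⟨v, hv, hvz⟩ := hqr.rareCode_mem z hz (hpq.rare_subset hrare)
    rw [← hvz]
    exact hpq.rareCode_mem v (mem_reach_of_rel hv) (label_eq_of_rareCode_eq hvz ▸ hrare)

lemma Rel.of_rel [IsTrans W R] {p q : NamedWorld R t N K} (hname : p.name = q.name)
    (h : R p.world q.world) : p.Rel q where
  label_mem := mem_image_of_mem t h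
  predLabels_subset := predLabels_subset_of_rel h
  rare_subset := rare_subset_of_rel h
  rareCode_mem z hz hrare := by
    rw [hname]
    exact mem_image_of_mem _ ⟨rel_of_mem_reach_rareSucc h hz, hrare⟩

lemma Rel.congr {p p' q q' : NamedWorld R t N K} (hp : p.code = p'.code)
    (hq : q.code = q'.code) (h : p.Rel q) : p'.Rel q' where
  label_mem := by
    rw [← label_eq_of_rareCode_eq hp, ← predLabels_eq_of_rareCode_eq hq]
    exact h.label_mem
  predLabels_subset := by
    rw [← predLabels_eq_of_rareCode_eq hp, ← predLabels_eq_of_rareCode_eq hq]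
    exact h.predLabels_subset
  rare_subset := by
    rw [← rare_eq_of_rareCode_eq hp, ← rare_eq_of_rareCode_eq hq]
    exact h.rare_subset
  rareCode_mem z hz hrare := by
    obtain ⟨u, hu, huz⟩ : rareCode R t N q'.name z ∈
        rareCode R t N q.name '' reach (RareSucc R t N) q.world :=
      image_code_reach_subset_of_code_eq q'.injOn_name q.injOn_name hq.symm (mem_image_of_mem _ hz)
    rw [← rare_eq_of_rareCode_eq hp, ← label_eq_of_rareCode_eq huz] at hrare
    rw [← huz]
    exact image_code_succ_subset_of_code_eq p.injOn_name p'.injOn_name hp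
      (h.rareCode_mem u hu hrare)

variable {M : ℕ} [Finite K]

lemma exists_world_eq [Nonempty K] (hM : ∀ x : W, (reach (RareSucc R t N) x).encard ≤ M)
    (hK : M ≤ Nat.card K) (x : W) : ∃ p : NamedWorld R t N K, p.world = x := by
  have hcard : (reach (RareSucc R t N) x).encard ≤ ENat.card K := by
    rw [ENat.card_eq_coe_natCard]
    exact (hM x).trans (Nat.cast_le.2 hK)
  obtain ⟨ν, hν, -⟩ := exists_injOn_eqOn_of_subset (ν := fun _ => Classical.arbitrary K)
    (injOn_empty _) (empty_subset _) (finite_of_encard_le_coe (hM x)) hcard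
  exact ⟨⟨ν, x, hν⟩, rfl⟩

lemma exists_renaming (hM : ∀ x : W, (reach (RareSucc R t N) x).encard ≤ M)
    (hK : (N + 1) * M ≤ Nat.card K) (p : NamedWorld R t N K) {Y : Set W} (hY : Y.encard ≤ N) :
    ∃ p' : NamedWorld R t N K, p'.world = p.world ∧ p'.code = p.code ∧
      InjOn p'.name Y ∧ ∀ y ∈ Y, InjOn p'.name (reach (RareSucc R t N) y) := by
  have : Nonempty K := ⟨p.name p.world⟩
  set X : Set W := ⋃ y ∈ insert p.world Y, reach (RareSucc R t N) y
  have hXsub : ∀ y ∈ insert p.world Y, reach (RareSucc R t N) y ⊆ X :=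
    fun y hy => subset_biUnion_of_mem (u := reach (RareSucc R t N)) hy
  have hXcard : X.encard ≤ ((N + 1) * M : ℕ) := by
    calc X.encard ≤ (insert p.world Y).encard * M := encard_biUnion_le_mul _ _ _ fun y _ => hM y
      _ ≤ (N + 1) * M := by
          gcongr
          exact (encard_insert_le _ _).trans (by gcongr)
      _ = ((N + 1) * M : ℕ) := by push_cast; rfl
  have hcard : X.encard ≤ ENat.card K := by
    rw [ENat.card_eq_coe_natCard]
    exact hXcard.trans (Nat.cast_le.2 hK)
  obtain ⟨μ, hμ, hμp⟩ := exists_injOn_eqOn_of_subset p.injOn_name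
    (hXsub p.world (mem_insert _ _)) (finite_of_encard_le_coe hXcard) hcard
  exact ⟨⟨μ, p.world, hμ.mono (hXsub _ (mem_insert _ _))⟩, rfl, code_congr hμp,
    hμ.mono fun y hy => hXsub y (mem_insert_of_mem _ hy) (mem_reach_self y),
    fun y hy => hμ.mono (hXsub y (mem_insert_of_mem _ hy))⟩

end NamedWorld

end NamedWorlds

/-- A map from a structure `(B, R')` to a structure `(W, R)` with worlds labelled by `t` which
preserves the set of labels of predecessors and, for every set of labels, the number of successors
with a label in that set, counted up to `N`. -/
structure IsGradedReduction {B W T : Type*} (R' : B → B → Prop) (R : W → W → Prop) (t : W → T)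
    (N : ℕ) (h : B → W) : Prop where
  min_encard_succ_eq : ∀ (b : B) (Q : Set T),
    min {d | R' b d ∧ t (h d) ∈ Q}.encard N = min {v | R (h b) v ∧ t v ∈ Q}.encard N
  predLabels_eq : ∀ b : B, predLabels R' (t ∘ h) b = predLabels R t (h b)

section CodeModel

universe u

variable {W T : Type*} (R : W → W → Prop) (t : W → T) (N : ℕ) (K : Type*)

/-- The universe of the finite model: the codes of named worlds. -/
abbrev CodeModel : Type _ := range (NamedWorld.code : NamedWorld R t N K → _)

variable {R t N K}

namespace CodeModel

/-- A chosen named world with the given code. -/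
noncomputable def rep (c : CodeModel R t N K) : NamedWorld R t N K := rangeSplitting _ c

/-- The code of a named world, as a point of the finite model. -/
def mk (p : NamedWorld R t N K) : CodeModel R t N K := rangeFactorization _ p

/-- The accessibility relation of the finite model. -/
def Rel (c d : CodeModel R t N K) : Prop := c.rep.Rel d.rep

lemma code_rep (c : CodeModel R t N K) : c.rep.code = c.1 := apply_rangeSplitting _ c

lemma code_rep_mk (p : NamedWorld R t N K) : (mk p).rep.code = p.code :=
  code_rep (mk p)

lemma label_rep_mk (p : NamedWorld R t N K) : t (mk p).rep.world = t p.world :=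
  label_eq_of_rareCode_eq (code_rep_mk p)

instance : IsTrans (CodeModel R t N K) Rel := ⟨fun _ _ _ => NamedWorld.Rel.trans⟩

lemma encard_succ_le_of_subset_rare (c : CodeModel R t N K) {Q : Set T}
    (hQ : Q ⊆ rare R t N c.rep.world) :
    {d | c.Rel d ∧ t d.rep.world ∈ Q}.encard ≤ {v | R c.rep.world v ∧ t v ∈ Q}.encard := by
  have hsub : Subtype.val '' {d : CodeModel R t N K | c.Rel d ∧ t d.rep.world ∈ Q} ⊆
      rareCode R t N c.rep.name '' {v | R c.rep.world v ∧ t v ∈ Q} := by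
    rintro _ ⟨d, ⟨hcd, hdQ⟩, rfl⟩
    obtain ⟨v, hv, hvd⟩ := hcd.rareCode_mem _ (mem_reach_self _) (hQ hdQ)
    exact ⟨v, ⟨hv.1, label_eq_of_rareCode_eq hvd ▸ hdQ⟩, hvd.trans (code_rep d)⟩
  calc {d | c.Rel d ∧ t d.rep.world ∈ Q}.encard
      = (Subtype.val '' {d : CodeModel R t N K | c.Rel d ∧ t d.rep.world ∈ Q}).encard :=
        (Subtype.val_injective.encard_image _).symm
    _ ≤ (rareCode R t N c.rep.name '' {v | R c.rep.world v ∧ t v ∈ Q}).encard :=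
        encard_le_encard hsub
    _ ≤ {v | R c.rep.world v ∧ t v ∈ Q}.encard := encard_image_le _ _

variable {M : ℕ} [IsTrans W R] [Finite K]

lemma min_encard_succ_le (hM : ∀ x : W, (reach (RareSucc R t N) x).encard ≤ M)
    (hK : (N + 1) * M ≤ Nat.card K) (c : CodeModel R t N K) (Q : Set T) :
    min {v | R c.rep.world v ∧ t v ∈ Q}.encard N ≤
      {d | c.Rel d ∧ t d.rep.world ∈ Q}.encard := by
  obtain ⟨Y, hYsub, hYcard⟩ := exists_subset_encard_eq
    (min_le_left {v | R c.rep.world v ∧ t v ∈ Q}.encard (N : ℕ∞))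
  obtain ⟨p, hpworld, hpcode, hinjY, hinj⟩ :=
    c.rep.exists_renaming hM hK (hYcard.trans_le (min_le_right _ _))
  have hsub : rareCode R t N p.name '' Y ⊆
      Subtype.val '' {d : CodeModel R t N K | c.Rel d ∧ t d.rep.world ∈ Q} := by
    rintro _ ⟨y, hy, rfl⟩
    let q : NamedWorld R t N K := ⟨p.name, y, hinj y hy⟩
    have hpq : p.Rel q := .of_rel rfl (hpworld ▸ (hYsub hy).1)
    refine ⟨mk q, ⟨hpq.congr hpcode (code_rep_mk q).symm, ?_⟩, rfl⟩
    rw [label_rep_mk q]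
    exact (hYsub hy).2
  have hinjCode : InjOn (rareCode R t N p.name) Y :=
    fun y hy z hz hyz => hinjY hy hz (congrArg (·.1.1) hyz)
  calc min {v | R c.rep.world v ∧ t v ∈ Q}.encard N
      = (rareCode R t N p.name '' Y).encard := by rw [hinjCode.encard_image, hYcard]
    _ ≤ (Subtype.val '' {d : CodeModel R t N K | c.Rel d ∧ t d.rep.world ∈ Q}).encard :=
        encard_le_encard hsub
    _ = {d | c.Rel d ∧ t d.rep.world ∈ Q}.encard := Subtype.val_injective.encard_image _

lemma exists_rel_label_eq (hN : 1 ≤ N) (hM : ∀ x : W, (reach (RareSucc R t N) x).encard ≤ M)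
    (hK : (N + 1) * M ≤ Nat.card K) (c : CodeModel R t N K) {v : W} (hv : R v c.rep.world) :
    ∃ d : CodeModel R t N K, d.Rel c ∧ t d.rep.world = t v := by
  obtain ⟨p, hpworld, hpcode, -, hinj⟩ :=
    c.rep.exists_renaming (Y := {v}) hM hK (by rw [encard_singleton]; exact_mod_cast hN)
  let q : NamedWorld R t N K := ⟨p.name, v, hinj v rfl⟩
  have hqp : q.Rel p := .of_rel rfl (hpworld ▸ hv)
  exact ⟨mk q, hqp.congr (code_rep_mk q).symm hpcode, label_rep_mk q⟩

lemma isGradedReduction (hN : 1 ≤ N) (hM : ∀ x : W, (reach (RareSucc R t N) x).encard ≤ M)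
    (hK : (N + 1) * M ≤ Nat.card K) :
    IsGradedReduction Rel R t N fun c : CodeModel R t N K => c.rep.world where
  min_encard_succ_eq c Q := by
    refine le_antisymm (le_min ?_ (min_le_right _ _))
      (le_min (min_encard_succ_le hM hK c Q) (min_le_right _ _))
    by_cases hQ : Q ⊆ rare R t N c.rep.world
    · exact (min_le_left _ _).trans (encard_succ_le_of_subset_rare c hQ)
    · exact (min_le_right _ _).trans (le_encard_succ_of_not_subset_rare hQ)
  predLabels_eq c := by
    apply Subset.antisymm
    · rintro _ ⟨d, hdc, rfl⟩
      exact NamedWorld.Rel.label_mem hdc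
    · rintro _ ⟨v, hv, rfl⟩
      exact exists_rel_label_eq hN hM hK c hv

end CodeModel

theorem exists_finite_isGradedReduction {W : Type*} {T : Type u} [Finite T] (R : W → W → Prop)
    [IsTrans W R] (t : W → T) {N : ℕ} (hN : 1 ≤ N) :
    ∃ (B : Type u) (R' : B → B → Prop) (h : B → W), Finite B ∧ IsTrans B R' ∧
      IsGradedReduction R' R t N h ∧ ∀ x, ∃ b, t (h b) = t x := by
  obtain ⟨M, hM⟩ := exists_encard_reach_rareSucc_le (R := R) (t := t) (N := N)
  let K : Type := Fin ((N + 1) * M + 1)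
  have hK : (N + 1) * M ≤ Nat.card K := by simp [K]
  have hMK : M ≤ Nat.card K := (Nat.le_mul_of_pos_left M N.succ_pos).trans hK
  refine ⟨CodeModel R t N K, CodeModel.Rel, fun c => c.rep.world, inferInstance, inferInstance,
    CodeModel.isGradedReduction hN hM hK, fun x => ?_⟩
  obtain ⟨p, rfl⟩ := NamedWorld.exists_world_eq hM hMK x
  exact ⟨CodeModel.mk p, CodeModel.label_rep_mk p⟩

end CodeModel

section Formulas

/-- The set of subformulas of a formula, including the formula itself. -/
def subformulas : MF → Set MF
  | .var p => {.var p}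
  | .neg φ => insert (.neg φ) (subformulas φ)
  | .and φ ψ => insert (.and φ ψ) (subformulas φ ∪ subformulas ψ)
  | .dia n φ => insert (.dia n φ) (subformulas φ)
  | .conv φ => insert (.conv φ) (subformulas φ)

/-- The largest `n` such that `⋄≥ₙ` occurs in a formula, and `0` if there is none. -/
def maxGrade : MF → ℕ
  | .var _ => 0
  | .neg φ => maxGrade φ
  | .and φ ψ => max (maxGrade φ) (maxGrade ψ)
  | .dia n φ => max n (maxGrade φ)
  | .conv φ => maxGrade φ

lemma finite_subformulas (φ : MF) : (subformulas φ).Finite := by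
  induction φ with
  | var p => exact finite_singleton (MF.var p)
  | and _ _ ihφ ihψ => exact (ihφ.union ihψ).insert _
  | neg _ ih | dia _ _ ih | conv _ ih => exact ih.insert _

lemma mem_subformulas_self (φ : MF) : φ ∈ subformulas φ := by
  cases φ <;> simp [subformulas]

variable {W T : Type*} (R : W → W → Prop) (V : ℕ → Set W)

/-- The label of `w` in the construction for `φ`: the subformulas of `φ` true at `w`. -/
def trueSubformulas (φ : MF) (w : W) : Set (subformulas φ) := {χ | Sat R V χ w}

variable {R V}

lemma sat_iff_of_trueSubformulas_eq {φ χ : MF} (hχ : χ ∈ subformulas φ) {x y : W}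
    (h : trueSubformulas R V φ x = trueSubformulas R V φ y) : Sat R V χ x ↔ Sat R V χ y :=
  Set.ext_iff.1 h ⟨χ, hχ⟩

lemma sat_dia_iff {n : ℕ} {φ : MF} {w : W} :
    Sat R V (.dia n φ) w ↔ (n : ℕ∞) ≤ {v | R w v ∧ Sat R V φ v}.encard :=
  natCast_le_encard_iff_exists_finset.symm

lemma IsGradedReduction.sat_iff {B : Type*} {R' : B → B → Prop} {t : W → T} {N : ℕ} {h : B → W}
    (hh : IsGradedReduction R' R t N h) {φ : MF} (hgrade : maxGrade φ ≤ N)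
    (ht : ∀ χ ∈ subformulas φ, ∀ x y, t x = t y → (Sat R V χ x ↔ Sat R V χ y)) (b : B) :
    Sat R' (fun p => h ⁻¹' V p) φ b ↔ Sat R V φ (h b) := by
  have label_mem_iff {ψ : MF} (hψ : ∀ x y, t x = t y → (Sat R V ψ x ↔ Sat R V ψ y)) (v : W) :
      t v ∈ t '' {x | Sat R V ψ x} ↔ Sat R V ψ v :=
    ⟨fun ⟨x, hx, hxv⟩ => (hψ x v hxv).1 hx, mem_image_of_mem t⟩
  induction φ generalizing b with
  | var p => exact Iff.rfl
  | neg ψ ih => exact not_congr (ih hgrade (fun χ hχ => ht χ (.inr hχ)) b)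
  | and ψ χ ihψ ihχ =>
    exact and_congr (ihψ ((le_max_left _ _).trans hgrade) (fun ξ hξ => ht ξ (.inr (.inl hξ))) b)
      (ihχ ((le_max_right _ _).trans hgrade) (fun ξ hξ => ht ξ (.inr (.inr hξ))) b)
  | dia n ψ ih =>
    have hn : (n : ℕ∞) ≤ N := Nat.cast_le.2 ((le_max_left _ _).trans hgrade)
    have hψ := label_mem_iff (ht ψ (.inr (mem_subformulas_self ψ)))
    have hcount := hh.min_encard_succ_eq b (t '' {x | Sat R V ψ x})
    simp only [hψ] at hcount
    rw [sat_dia_iff, sat_dia_iff]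
    simp only [ih ((le_max_right _ _).trans hgrade) (fun χ hχ => ht χ (.inr hχ))]
    rw [← and_iff_left (a := _ ≤ _) hn, ← le_min_iff, hcount, le_min_iff, and_iff_left hn]
  | conv ψ ih =>
    have hψ := ht ψ (.inr (mem_subformulas_self ψ))
    have hpred := hh.predLabels_eq b
    simp only [Sat, ih hgrade (fun χ hχ => ht χ (.inr hχ))]
    constructor
    · rintro ⟨d, hdb, hd⟩
      obtain ⟨v, hv, hvd⟩ := hpred.subset (mem_image_of_mem (t ∘ h) hdb)
      exact ⟨v, hv, (hψ _ _ hvd).2 hd⟩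
    · rintro ⟨v, hvb, hv⟩
      obtain ⟨d, hd, hdv⟩ := hpred.superset (mem_image_of_mem t hvb)
      exact ⟨d, hd, (hψ _ _ hdv).2 hv⟩

end Formulas

end K4LocalFMP

theorem k4_local_finite_model_property (φ : MF)
    (h : ∃ (W : Type v) (R : W → W → Prop) (V : ℕ → Set W),
      (∀ x y z : W, R x y → R y z → R x z) ∧ (∃ w : W, Sat R V φ w)) :
    ∃ (W : Type) (R : W → W → Prop) (V : ℕ → Set W),
      Finite W ∧ (∀ x y z : W, R x y → R y z → R x z) ∧ (∃ w : W, Sat R V φ w) := by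
  obtain ⟨W, R, V, htrans, w, hw⟩ := h
  have : IsTrans W R := ⟨htrans⟩
  have : Finite (K4LocalFMP.subformulas φ) := K4LocalFMP.finite_subformulas φ
  obtain ⟨B, R', h, hfin, htrans', hred, hlabels⟩ :=
    K4LocalFMP.exists_finite_isGradedReduction R (K4LocalFMP.trueSubformulas R V φ)
      (Nat.succ_pos (K4LocalFMP.maxGrade φ))
  have sat_iff : ∀ b, Sat R' (fun p => h ⁻¹' V p) φ b ↔ Sat R V φ (h b) :=
    hred.sat_iff (Nat.le_succ _) fun _ hχ _ _ => K4LocalFMP.sat_iff_of_trueSubformulas_eq hχ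
  obtain ⟨b, hb⟩ := hlabels w
  have hsat : Sat R V φ (h b) :=
    (K4LocalFMP.sat_iff_of_trueSubformulas_eq (K4LocalFMP.mem_subformulas_self φ) hb).2 hw
  exact ⟨B, R', fun p => h ⁻¹' V p, hfin, htrans'.trans, b, (sat_iff b).2 hsat⟩
end

section
/- The logic D4(⋄≥, ⟟) has the local finite model property: if a formula φ of the modal language (⋄≥, ⟟) is satisfied at some world of some Kripke structure whose accessibility relation is serial and transitive, then φ is satisfied at some world of some Kripke structure with a finite universe whose accessibility relation is serial and transitive. -/
universe v

/-!
A type (the set of subformulas of `φ` true at a world) is *rare* at `x` if it has fewer successors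
of `x` than the largest grade in `φ`; rare types only grow along the accessibility relation. The
successors of `x` with a rare type are its *kings*. The kings of `x`, their kings, and so on form
the *court* of `x`, whose size is bounded uniformly, because descending to a king of a king gives
something new only when the set of common types has shrunk.

So finitely many colours suffice to colour each court injectively, and up to bisimilarity along
king steps only finitely many worlds with such a colouring remain. These classes form the finite
frame. Its accessibility relation makes rare types and past types grow, and every new world of a
type rare at the source must be one of the kings of the source; this is a transitive condition.
Successors of a rare type are hence not multiplied in the quotient, while any few successors can
be kept apart in it by first recolouring the world, within its class, so that their courts are
jointly injectively coloured. Graded modalities are therefore preserved, and so is the converse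
modality because the past types of a world are visible in its class.
-/

section Bisimilarity

variable {α β : Type*} {step : α → α → Prop} {label : α → β}

/-- Bisimulations of a transition system `step` whose states are labelled by `label`. -/
structure IsBisimulation (step : α → α → Prop) (label : α → β) (Z : α → α → Prop) : Prop where
  label_eq : ∀ {a b}, Z a b → label a = label b
  forth : ∀ {a b a'}, Z a b → step a a' → ∃ b', step b b' ∧ Z a' b'
  back : ∀ {a b b'}, Z a b → step b b' → ∃ a', step a a' ∧ Z a' b'

/-- Bisimilarity of two states of a labelled transition system. -/
def Bisimilar (step : α → α → Prop) (label : α → β) (a b : α) : Prop :=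
  ∃ Z, IsBisimulation step label Z ∧ Z a b

namespace Bisimilar

variable {a a' b c : α}

theorem refl (a : α) : Bisimilar step label a a :=
  ⟨Eq, ⟨fun h => h ▸ rfl, fun h hs => ⟨_, h ▸ hs, rfl⟩, fun h hs => ⟨_, h ▸ hs, rfl⟩⟩, rfl⟩

theorem symm : Bisimilar step label a b → Bisimilar step label b a := by
  rintro ⟨Z, hZ, hab⟩
  exact ⟨flip Z, ⟨fun h => (hZ.label_eq h).symm, fun h hs => hZ.back h hs,
    fun h hs => hZ.forth h hs⟩, hab⟩

theorem trans :
    Bisimilar step label a b → Bisimilar step label b c → Bisimilar step label a c := by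
  rintro ⟨Y, hY, hab⟩ ⟨Z, hZ, hbc⟩
  refine ⟨Relation.Comp Y Z, ⟨?_, ?_, ?_⟩, b, hab, hbc⟩
  · rintro _ _ ⟨y, hxy, hyz⟩
    exact (hY.label_eq hxy).trans (hZ.label_eq hyz)
  · rintro _ _ _ ⟨y, hxy, hyz⟩ hs
    obtain ⟨y', hy', hxy'⟩ := hY.forth hxy hs
    obtain ⟨z', hz', hyz'⟩ := hZ.forth hyz hy'
    exact ⟨z', hz', y', hxy', hyz'⟩
  · rintro _ _ _ ⟨y, hxy, hyz⟩ hs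
    obtain ⟨y', hy', hyz'⟩ := hZ.back hyz hs
    obtain ⟨x', hx', hxy'⟩ := hY.back hxy hy'
    exact ⟨x', hx', y', hxy', hyz'⟩

theorem label_eq : Bisimilar step label a b → label a = label b := by
  rintro ⟨_, hZ, hab⟩
  exact hZ.label_eq hab

theorem forth (h : Bisimilar step label a b) (hs : step a a') :
    ∃ b', step b b' ∧ Bisimilar step label a' b' := by
  obtain ⟨Z, hZ, hab⟩ := h
  obtain ⟨b', hb', hab'⟩ := hZ.forth hab hs
  exact ⟨b', hb', Z, hZ, hab'⟩

theorem forth_reflGen (h : Bisimilar step label a b) (hs : Relation.ReflGen step a a') :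
    ∃ b', Relation.ReflGen step b b' ∧ Bisimilar step label a' b' := by
  cases hs with
  | refl => exact ⟨b, .refl, h⟩
  | single hs =>
    obtain ⟨b', hb', hab'⟩ := h.forth hs
    exact ⟨b', .single hb', hab'⟩

end Bisimilar

/-- The states reachable from `a` in any number of steps. -/
def reachable (step : α → α → Prop) (a : α) : Set α := {b | Relation.ReflTransGen step a b}

/-- The label of a state together with those of its one-step successors. -/
def localProfile (step : α → α → Prop) (label : α → β) (a : α) : β × Set β :=
  (label a, label '' {b | step a b})

/-- The label of a state together with all local profiles reachable from it. When labels tell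
reachable states apart, this describes the reachable part up to isomorphism. -/
def globalProfile (step : α → α → Prop) (label : α → β) (a : α) : β × Set (β × Set β) :=
  (label a, localProfile step label '' reachable step a)

theorem exists_step_label_eq_of_localProfile_mem_image {b c c' d : α}
    (hb : Set.InjOn label (reachable step b))
    (hc : localProfile step label c ∈ localProfile step label '' reachable step b)
    (hd : d ∈ reachable step b) (hcd : label c = label d) (hs : step c c') :
    ∃ d', step d d' ∧ label c' = label d' := by
  obtain ⟨d₀, hd₀, hprofile⟩ := hc
  have hd₀d : d₀ = d := hb hd₀ hd ((congrArg Prod.fst hprofile).trans hcd)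
  have hlabels : label '' {x | step d x} = label '' {x | step c x} :=
    hd₀d ▸ congrArg Prod.snd hprofile
  obtain ⟨d', hd', h⟩ := hlabels.ge ⟨c', hs, rfl⟩
  exact ⟨d', hd', h.symm⟩

theorem bisimilar_of_globalProfile_eq (hinj : ∀ a, Set.InjOn label (reachable step a)) {a b : α}
    (h : globalProfile step label a = globalProfile step label b) : Bisimilar step label a b := by
  have hprofiles := congrArg Prod.snd h
  refine ⟨fun c d => c ∈ reachable step a ∧ d ∈ reachable step b ∧ label c = label d,
    ⟨fun h => h.2.2, ?_, ?_⟩, .refl, .refl, congrArg Prod.fst h⟩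
  · rintro c d c' ⟨hc, hd, hcd⟩ hs
    obtain ⟨d', hd', h'⟩ := exists_step_label_eq_of_localProfile_mem_image (hinj b)
      (hprofiles.le ⟨c, hc, rfl⟩) hd hcd hs
    exact ⟨d', hd', hc.tail hs, hd.tail hd', h'⟩
  · rintro c d d' ⟨hc, hd, hcd⟩ hs
    obtain ⟨c', hc', h'⟩ := exists_step_label_eq_of_localProfile_mem_image (hinj a)
      (hprofiles.ge ⟨d, hd, rfl⟩) hc hcd.symm hs
    exact ⟨c', hc', hc.tail hc', hd.tail hs, h'.symm⟩

variable (step label) in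
/-- Bisimilarity as a setoid. -/
def bisimilaritySetoid : Setoid α :=
  ⟨Bisimilar step label, Bisimilar.refl, Bisimilar.symm, Bisimilar.trans⟩

theorem finite_quotient_bisimilaritySetoid [Finite β]
    (hinj : ∀ a, Set.InjOn label (reachable step a)) :
    Finite (Quotient (bisimilaritySetoid step label)) :=
  Finite.of_injective (fun a => globalProfile step label a.out) fun _ _ h =>
    Quotient.out_equiv_out.1 (bisimilar_of_globalProfile_eq hinj h)

end Bisimilarity

section Cardinality

variable {α ι κ : Type*}

theorem encard_biUnion_le_mul {s : Set ι} (hs : s.Finite) {f : ι → Set α} {m : ℕ∞}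
    (hf : ∀ i ∈ s, (f i).encard ≤ m) : (⋃ i ∈ s, f i).encard ≤ s.encard * m := by
  lift s to Finset ι using hs
  calc (⋃ i ∈ s, f i).encard ≤ ∑ i ∈ s, (f i).encard := s.set_encard_biUnion_le f
    _ ≤ s.card • m := Finset.sum_le_card_nsmul s _ m hf
    _ = (s : Set ι).encard * m := by rw [nsmul_eq_mul, Set.encard_coe_eq_coe_finsetCard]

theorem exists_injOn_union_eqOn {γ : α → κ} {s t : Set α} (hγ : Set.InjOn γ s)
    (hfin : (s ∪ t).Finite) (hcard : (s ∪ t).encard ≤ ENat.card κ) :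
    ∃ δ : α → κ, Set.EqOn δ γ s ∧ Set.InjOn δ (s ∪ t) := by
  classical
  cases isEmpty_or_nonempty κ with
  | inl _ => exact ⟨γ, Set.eqOn_refl _ _, fun a => isEmptyElim (γ a)⟩
  | inr _ =>
    have hs : s.Finite := hfin.subset Set.subset_union_left
    have hroom : (t \ s).encard ≤ (γ '' s)ᶜ.encard := by
      rw [← ENat.add_le_add_iff_left hs.encard_lt_top.ne]
      calc s.encard + (t \ s).encard = (s ∪ t).encard := by
            rw [← Set.encard_union_eq Set.disjoint_sdiff_right, Set.union_sdiff_self]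
        _ ≤ ENat.card κ := hcard
        _ = s.encard + (γ '' s)ᶜ.encard := by
            rw [← hγ.encard_image, Set.encard_add_encard_compl, Set.encard_univ]
    obtain ⟨f, hf, hfinj⟩ :=
      (hfin.subset Set.subset_union_right).sdiff.exists_injOn_of_encard_le hroom
    have hδs : Set.EqOn (s.piecewise γ f) γ s := s.piecewise_eqOn γ f
    have hδt : Set.EqOn (s.piecewise γ f) f (t \ s) :=
      (s.piecewise_eqOn_compl γ f).mono fun _ ha => ha.2
    refine ⟨s.piecewise γ f, hδs, ?_⟩
    rw [← Set.union_sdiff_self, Set.injOn_union Set.disjoint_sdiff_right]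
    refine ⟨hγ.congr hδs.symm, hfinj.congr hδt.symm, fun a ha b hb hab => ?_⟩
    rw [hδs ha, hδt hb] at hab
    exact hf hb ⟨a, ha, hab⟩

end Cardinality

/-- A Kripke frame whose worlds carry types from `T`, with a threshold `bound` up to which
successors of a given type are to be counted exactly. -/
structure TypedFrame (W T : Type*) where
  rel : W → W → Prop
  type : W → T
  bound : ℕ

namespace TypedFrame

variable {W T κ : Type*} (F : TypedFrame W T)

/-- The successors of `x` whose type lies in `U`. -/
def successors (U : Set T) (x : W) : Set W := {y | F.rel x y ∧ F.type y ∈ U}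

/-- The types of the predecessors of `x`. -/
def pastTypes (x : W) : Set T := F.type '' {y | F.rel y x}

/-- A type is rare at `x` if fewer than `F.bound` successors of `x` have it. -/
def IsRare (x : W) (t : T) : Prop := (F.successors {t} x).encard < F.bound

/-- A king of `x` is a successor of `x` whose type is rare at `x`. -/
def IsKing (x y : W) : Prop := F.rel x y ∧ F.IsRare x (F.type y)

/-- The court of `x`: the kings of `x`, the kings of those kings, and so on, with `x` itself.
A king of a king of `x` need not be a king of `x`, as fewer types are rare at `x`. -/
def court (x : W) : Set W := reachable F.IsKing x

/-- The types that are not rare at `x`. -/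
def commonTypes (x : W) : Set T := {t | ¬ F.IsRare x t}

variable {F} {x y z : W}

theorem mem_court_self (x : W) : x ∈ F.court x := Relation.ReflTransGen.refl

theorem court_subset_of_mem (h : y ∈ F.court x) : F.court y ⊆ F.court x := fun _ hz => h.trans hz

section CourtBound

theorem successors_subset_of_rel [IsTrans W F.rel] (hxy : F.rel x y) (U : Set T) :
    F.successors U y ⊆ F.successors U x := fun _ hz => ⟨_root_.trans hxy hz.1, hz.2⟩

theorem IsRare.mono [IsTrans W F.rel] (hxy : F.rel x y) {t : T} (ht : F.IsRare x t) :
    F.IsRare y t :=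
  (Set.encard_le_encard (successors_subset_of_rel hxy {t})).trans_lt ht

theorem commonTypes_subset_of_rel [IsTrans W F.rel] (hxy : F.rel x y) :
    F.commonTypes y ⊆ F.commonTypes x := fun _ ht hx => ht (hx.mono hxy)

theorem IsKing.of_rel [IsTrans W F.rel] (hxy : F.rel x y) (hyz : F.IsKing y z)
    (hz : F.IsRare x (F.type z)) : F.IsKing x z :=
  ⟨_root_.trans hxy hyz.1, hz⟩

theorem encard_kings_le [Finite T] (x : W) :
    {y | F.IsKing x y}.encard ≤ ENat.card T * F.bound := by
  have hcover : {y | F.IsKing x y} = ⋃ t ∈ Set.univ, {y | F.IsKing x y ∧ F.type y = t} := by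
    ext y
    simp
  rw [hcover, ← Set.encard_univ]
  refine encard_biUnion_le_mul Set.finite_univ fun t _ => ?_
  by_cases ht : F.IsRare x t
  · have hsub : {y | F.IsKing x y ∧ F.type y = t} ⊆ F.successors {t} x :=
      fun _ hy => ⟨hy.1.1, hy.2⟩
    exact (Set.encard_le_encard hsub).trans ht.le
  · have hempty : {y | F.IsKing x y ∧ F.type y = t} = ∅ :=
      Set.eq_empty_of_forall_notMem fun _ hy => ht (hy.2 ▸ hy.1.2)
    simp only [hempty, Set.encard_empty, zero_le]

theorem finite_kings [Finite T] (x : W) : {y | F.IsKing x y}.Finite :=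
  Set.encard_lt_top_iff.1 <| (encard_kings_le x).trans_lt <| by
    rw [ENat.card_eq_coe_natCard]
    exact_mod_cast ENat.natCast_lt_top _

/-- If a king `k` of `x` has the same rare types as `x`, then its kings are already kings of `x`,
so only kings with fewer common types enlarge the court. -/
theorem court_subset [IsTrans W F.rel] (x : W) :
    F.court x ⊆ insert x ({y | F.IsKing x y} ∪
      ⋃ k ∈ {k | F.IsKing x k ∧ F.commonTypes k ⊂ F.commonTypes x}, F.court k) := by
  intro z hz
  induction hz with
  | refl => exact .inl rfl
  | @tail k z _ hkz ih =>
    obtain rfl | hk | hk := ih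
    · exact .inr (.inl hkz)
    · by_cases hz : F.IsRare x (F.type z)
      · exact .inr (.inl (hkz.of_rel hk.1 hz))
      · have hlt : F.commonTypes k ⊂ F.commonTypes x :=
          ⟨commonTypes_subset_of_rel hk.1, fun hsub => hsub hz hkz.2⟩
        exact .inr (.inr (Set.mem_biUnion ⟨hk, hlt⟩ (.single hkz)))
    · obtain ⟨l, hl, hlk⟩ := Set.mem_iUnion₂.1 hk
      exact .inr (.inr (Set.mem_biUnion hl (hlk.tail hkz)))

theorem encard_court_le_of_commonTypes_ssubset [Finite T] [IsTrans W F.rel] {m : ℕ∞}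
    (hm : ∀ k, F.commonTypes k ⊂ F.commonTypes x → (F.court k).encard ≤ m) :
    (F.court x).encard ≤ ENat.card T * F.bound * (m + 1) + 1 := by
  set K := {k | F.IsKing x k ∧ F.commonTypes k ⊂ F.commonTypes x}
  have hK : K ⊆ {y | F.IsKing x y} := fun _ hk => hk.1
  have hcourts : (⋃ k ∈ K, F.court k).encard ≤ ENat.card T * F.bound * m :=
    (encard_biUnion_le_mul ((finite_kings x).subset hK) fun k hk => hm k hk.2).trans
      (mul_le_mul_left ((Set.encard_le_encard hK).trans (encard_kings_le x)) m)
  calc (F.court x).encard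
      ≤ ({y | F.IsKing x y} ∪ ⋃ k ∈ K, F.court k).encard + 1 :=
        (Set.encard_le_encard (court_subset x)).trans (Set.encard_insert_le _ _)
    _ ≤ (ENat.card T * F.bound + ENat.card T * F.bound * m) + 1 := by
        gcongr
        exact (Set.encard_union_le _ _).trans (add_le_add (encard_kings_le x) hcourts)
    _ = ENat.card T * F.bound * (m + 1) + 1 := by ring

theorem exists_encard_court_le [Finite T] [IsTrans W F.rel] :
    ∃ m : ℕ, ∀ x, (F.court x).encard ≤ m := by
  suffices h : ∀ n : ℕ, ∃ m : ℕ, ∀ x, (F.commonTypes x).ncard < n → (F.court x).encard ≤ m by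
    obtain ⟨m, hm⟩ := h (Nat.card T + 1)
    exact ⟨m, fun x => hm x (Nat.lt_succ_of_le (Set.ncard_le_card _))⟩
  intro n
  induction n with
  | zero => exact ⟨0, fun x hx => absurd hx (Nat.not_lt_zero _)⟩
  | succ n ih =>
    obtain ⟨m, hm⟩ := ih
    refine ⟨Nat.card T * F.bound * (m + 1) + 1, fun x hx => ?_⟩
    have hcourt := encard_court_le_of_commonTypes_ssubset (x := x) (m := m) fun k hk =>
      hm k ((Set.ncard_lt_ncard hk).trans_le (Nat.le_of_lt_succ hx))
    rw [ENat.card_eq_coe_natCard] at hcourt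
    exact_mod_cast hcourt

end CourtBound

variable (F κ) in
/-- A world together with a colouring of the frame under which the members of its court have
distinct colours; only the colours of the court matter. -/
structure ColouredWorld where
  world : W
  colour : W → κ
  injOn_court : Set.InjOn colour (F.court world)

namespace ColouredWorld

variable {p p' q q' r : F.ColouredWorld κ}

/-- One step of the transition system on coloured worlds: `q` sits at a king of the world of `p`
and has the colouring of `p`. -/
def KingStep (p q : F.ColouredWorld κ) : Prop :=
  q.colour = p.colour ∧ F.IsKing p.world q.world

/-- What is visible at a coloured world: its colour, its type, its rare types, and the types in
its past. -/
def label (p : F.ColouredWorld κ) : κ × T × Set T × Set T :=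
  (p.colour p.world, F.type p.world, {t | F.IsRare p.world t}, F.pastTypes p.world)

theorem colour_eq_and_mem_court_of_mem_reachable (h : q ∈ reachable KingStep p) :
    q.colour = p.colour ∧ q.world ∈ F.court p.world := by
  induction h with
  | refl => exact ⟨rfl, mem_court_self _⟩
  | tail _ hs ih => exact ⟨hs.1.trans ih.1, ih.2.tail hs.2⟩

theorem ext_of_colour_eq (hc : p.colour = q.colour) (hw : p.world = q.world) : p = q := by
  cases p
  cases q
  cases hc
  cases hw
  rfl

theorem injOn_label_reachable (p : F.ColouredWorld κ) :
    Set.InjOn label (reachable KingStep p) := by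
  intro q hq r hr hqr
  obtain ⟨hqc, hqw⟩ := colour_eq_and_mem_court_of_mem_reachable hq
  obtain ⟨hrc, hrw⟩ := colour_eq_and_mem_court_of_mem_reachable hr
  refine ext_of_colour_eq (hqc.trans hrc.symm) (p.injOn_court hqw hrw ?_)
  simpa only [label, hqc, hrc] using congrArg Prod.fst hqr

/-- Coloured worlds are identified when they are bisimilar along king steps. -/
instance setoid : Setoid (F.ColouredWorld κ) := bisimilaritySetoid KingStep label

theorem equiv_forth (h : p ≈ q) (hs : KingStep p p') : ∃ q', KingStep q q' ∧ p' ≈ q' :=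
  Bisimilar.forth h hs

theorem equiv_forth_reflGen (h : p ≈ q) (hs : Relation.ReflGen KingStep p p') :
    ∃ q', Relation.ReflGen KingStep q q' ∧ p' ≈ q' :=
  Bisimilar.forth_reflGen h hs

theorem colour_eq_of_equiv (h : p ≈ q) : p.colour p.world = q.colour q.world :=
  congrArg Prod.fst h.label_eq

theorem type_eq_of_equiv (h : p ≈ q) : F.type p.world = F.type q.world :=
  congrArg (fun l => l.2.1) h.label_eq

theorem isRare_iff_of_equiv (h : p ≈ q) {t : T} : F.IsRare p.world t ↔ F.IsRare q.world t :=
  Set.ext_iff.1 (congrArg (fun l => l.2.2.1) h.label_eq) t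

theorem pastTypes_eq_of_equiv (h : p ≈ q) : F.pastTypes p.world = F.pastTypes q.world :=
  congrArg (fun l => l.2.2.2) h.label_eq

theorem equiv_of_eqOn_court (hw : p.world = q.world)
    (hc : Set.EqOn p.colour q.colour (F.court p.world)) : p ≈ q := by
  refine ⟨fun a b => a.world = b.world ∧ Set.EqOn a.colour b.colour (F.court a.world),
    ⟨?_, ?_, ?_⟩, hw, hc⟩
  · rintro ⟨x, _, _⟩ ⟨_, _, _⟩ ⟨rfl, hc⟩
    have hx := hc (mem_court_self x)
    exact congrArg (·, _) hx
  · rintro ⟨x, γ, _⟩ ⟨_, δ, hδ⟩ ⟨k, _, hγ⟩ ⟨rfl, hc⟩ ⟨rfl, hk⟩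
    have hsub : F.court k ⊆ F.court x := court_subset_of_mem (.single hk)
    exact ⟨⟨k, δ, hδ.mono hsub⟩, ⟨rfl, hk⟩, rfl, hc.mono hsub⟩
  · rintro ⟨x, γ, hγ⟩ ⟨_, δ, _⟩ ⟨k, _, hδ⟩ ⟨rfl, hc⟩ ⟨rfl, hk⟩
    have hsub : F.court k ⊆ F.court x := court_subset_of_mem (.single hk)
    exact ⟨⟨k, γ, hγ.mono hsub⟩, ⟨rfl, hk⟩, rfl, hc.mono hsub⟩

/-- The relation between coloured worlds that induces accessibility in the finite frame. Beyond
monotonicity of rareness and of the past, the worlds `q` may see must not add new successors of a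
type that is rare at `p`: every such successor has to be a king of `p`, up to bisimilarity. -/
structure Precedes (p q : F.ColouredWorld κ) : Prop where
  isRare : ∀ {t}, F.IsRare p.world t → F.IsRare q.world t
  type_mem_pastTypes : F.type p.world ∈ F.pastTypes q.world
  pastTypes_subset : F.pastTypes p.world ⊆ F.pastTypes q.world
  exists_kingStep : ∀ {k}, Relation.ReflGen KingStep q k → F.IsRare p.world (F.type k.world) →
    ∃ l, KingStep p l ∧ k ≈ l

theorem Precedes.trans (hpq : Precedes p q) (hqr : Precedes q r) : Precedes p r where
  isRare ht := hqr.isRare (hpq.isRare ht)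
  type_mem_pastTypes := hqr.pastTypes_subset hpq.type_mem_pastTypes
  pastTypes_subset := hpq.pastTypes_subset.trans hqr.pastTypes_subset
  exists_kingStep hk ht := by
    obtain ⟨l, hl, hkl⟩ := hqr.exists_kingStep hk (hpq.isRare ht)
    obtain ⟨m, hm, hlm⟩ := hpq.exists_kingStep (.single hl) (type_eq_of_equiv hkl ▸ ht)
    exact ⟨m, hm, hkl.trans hlm⟩

theorem Precedes.congr (h : Precedes p q) (hp : p ≈ p') (hq : q ≈ q') : Precedes p' q' where
  isRare ht := (isRare_iff_of_equiv hq).1 (h.isRare ((isRare_iff_of_equiv hp).2 ht))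
  type_mem_pastTypes :=
    type_eq_of_equiv hp ▸ pastTypes_eq_of_equiv hq ▸ h.type_mem_pastTypes
  pastTypes_subset :=
    pastTypes_eq_of_equiv hp ▸ pastTypes_eq_of_equiv hq ▸ h.pastTypes_subset
  exists_kingStep hk ht := by
    obtain ⟨k', hk', hkk'⟩ := equiv_forth_reflGen hq.symm hk
    obtain ⟨l, hl, hkl⟩ := h.exists_kingStep hk'
      (type_eq_of_equiv hkk' ▸ (isRare_iff_of_equiv hp).2 ht)
    obtain ⟨l', hl', hll'⟩ := equiv_forth hp hl
    exact ⟨l', hl', hkk'.trans (hkl.trans hll')⟩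

theorem precedes_of_rel [IsTrans W F.rel] (hc : q.colour = p.colour)
    (h : F.rel p.world q.world) : Precedes p q where
  isRare ht := ht.mono h
  type_mem_pastTypes := ⟨p.world, h, rfl⟩
  pastTypes_subset := Set.image_mono fun _ hx => _root_.trans hx h
  exists_kingStep {k} hk ht := by
    refine ⟨k, ?_, Setoid.refl k⟩
    cases hk with
    | refl => exact ⟨hc, h, ht⟩
    | single hk => exact ⟨hk.1.trans hc, hk.2.of_rel h ht⟩

end ColouredWorld

variable (F κ) in
/-- Bisimilarity classes of coloured worlds, the worlds of the finite frame. -/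
abbrev QuotientWorld := Quotient (ColouredWorld.setoid (F := F) (κ := κ))

instance finite_quotientWorld [Finite T] [Finite κ] : Finite (F.QuotientWorld κ) :=
  finite_quotient_bisimilaritySetoid ColouredWorld.injOn_label_reachable

section Colouring

open ColouredWorld

variable (F κ) in
/-- There are enough colours to colour injectively the union of the courts of any `F.bound + 2`
worlds: one world and up to `F.bound + 1` others, so that it can always be accompanied by up to
`F.bound` successors, and by a single successor or predecessor even if `F.bound = 0`. -/
def HasEnoughColours : Prop :=
  ∀ s : Finset W, s.card ≤ F.bound + 2 → (⋃ x ∈ s, F.court x).encard ≤ ENat.card κ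

theorem exists_hasEnoughColours (F : TypedFrame W T) [Finite T] [IsTrans W F.rel] :
    ∃ n : ℕ, F.HasEnoughColours (Fin n) := by
  obtain ⟨m, hm⟩ := F.exists_encard_court_le
  refine ⟨(F.bound + 2) * m, fun s hs => ?_⟩
  calc (⋃ x ∈ s, F.court x).encard ≤ (s : Set W).encard * m :=
        encard_biUnion_le_mul s.finite_toSet fun x _ => hm x
    _ ≤ ENat.card (Fin ((F.bound + 2) * m)) := by
        rw [Set.encard_coe_eq_coe_finsetCard, ENat.card_eq_coe_fintype_card, Fintype.card_fin]
        exact_mod_cast Nat.mul_le_mul_right m hs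

theorem HasEnoughColours.exists_colouredWorld [Finite κ] (hκ : F.HasEnoughColours κ) (x : W) :
    ∃ p : F.ColouredWorld κ, p.world = x := by
  have hcard : (F.court x).encard ≤ (Set.univ : Set κ).encard := by
    simpa using hκ {x} (by simp)
  have hfin : (F.court x).Finite := Set.finite_univ.finite_of_encard_le hcard
  have : Nonempty κ := Set.nonempty_iff_univ_nonempty.2 <|
    Set.encard_pos.1 ((Set.encard_pos.2 ⟨x, mem_court_self x⟩).trans_le hcard)
  obtain ⟨γ, -, hγ⟩ := hfin.exists_injOn_of_encard_le hcard
  exact ⟨⟨x, γ, hγ⟩, rfl⟩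

theorem HasEnoughColours.exists_recolouring [Finite κ] (hκ : F.HasEnoughColours κ)
    (p : F.ColouredWorld κ) {s : Finset W} (hs : s.card ≤ F.bound + 1) :
    ∃ (δ : W → κ) (hδ : Set.InjOn δ (F.court p.world)),
      (⟨p.world, δ, hδ⟩ : F.ColouredWorld κ) ≈ p ∧ Set.InjOn δ (⋃ x ∈ s, F.court x) := by
  classical
  have hcard := hκ (insert p.world s) ((Finset.card_insert_le _ _).trans (Nat.succ_le_succ hs))
  rw [Finset.set_biUnion_insert] at hcard
  have hfin : (F.court p.world ∪ ⋃ x ∈ s, F.court x).Finite :=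
    Set.finite_univ.finite_of_encard_le (hcard.trans_eq (Set.encard_univ κ).symm)
  obtain ⟨δ, hδp, hδ⟩ := exists_injOn_union_eqOn p.injOn_court hfin hcard
  exact ⟨δ, hδ.mono Set.subset_union_left, equiv_of_eqOn_court rfl hδp,
    hδ.mono Set.subset_union_right⟩

variable [IsTrans W F.rel] [Finite κ]

theorem HasEnoughColours.exists_injective_precedes (hκ : F.HasEnoughColours κ)
    (p : F.ColouredWorld κ) {s : Finset W} (hs : ∀ y ∈ s, F.rel p.world y)
    (hcard : s.card ≤ F.bound + 1) :
    ∃ f : s → F.ColouredWorld κ, (∀ y, (f y).world = y ∧ Precedes p (f y)) ∧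
      Function.Injective fun y => (⟦f y⟧ : F.QuotientWorld κ) := by
  obtain ⟨δ, hδ, hδp, hinj⟩ := hκ.exists_recolouring p hcard
  have hsub : ∀ y ∈ s, F.court y ⊆ ⋃ x ∈ s, F.court x := fun _ => Set.subset_biUnion_of_mem
  let f (y : s) : F.ColouredWorld κ := ⟨y, δ, hinj.mono (hsub y y.2)⟩
  have hf (y : s) : Precedes ⟨p.world, δ, hδ⟩ (f y) := precedes_of_rel rfl (hs y y.2)
  refine ⟨f, fun y => ⟨rfl, (hf y).congr hδp (Setoid.refl _)⟩, fun y z hyz => ?_⟩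
  exact Subtype.ext <| hinj (hsub y y.2 (mem_court_self _)) (hsub z z.2 (mem_court_self _))
    (colour_eq_of_equiv (Quotient.exact hyz))

theorem HasEnoughColours.exists_precedes_of_rel (hκ : F.HasEnoughColours κ)
    (p : F.ColouredWorld κ) {x : W} (hx : F.rel x p.world) :
    ∃ q : F.ColouredWorld κ, q.world = x ∧ Precedes q p := by
  obtain ⟨δ, hδ, hδp, hinj⟩ := hκ.exists_recolouring p (s := {x}) (by simp)
  rw [Finset.set_biUnion_singleton] at hinj
  have hq : Precedes (⟨x, δ, hinj⟩ : F.ColouredWorld κ) ⟨p.world, δ, hδ⟩ := precedes_of_rel rfl hx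
  exact ⟨_, rfl, hq.congr (Setoid.refl _) hδp⟩

end Colouring

section Quotient

open ColouredWorld

variable (F κ) in
/-- The frame of bisimilarity classes of coloured worlds. -/
def quotient : TypedFrame (F.QuotientWorld κ) T where
  rel := Quotient.lift₂ Precedes fun _ _ _ _ hp hq =>
    propext ⟨fun h => h.congr hp hq, fun h => h.congr hp.symm hq.symm⟩
  type := Quotient.lift (fun p => F.type p.world) fun _ _ => type_eq_of_equiv
  bound := F.bound

variable {p : F.ColouredWorld κ}

instance isTrans_quotient : IsTrans _ (F.quotient κ).rel where
  trans := by
    rintro ⟨p⟩ ⟨q⟩ ⟨r⟩ hpq hqr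
    exact Precedes.trans hpq hqr

theorem serial_quotient [IsTrans W F.rel] [Finite κ] (hκ : F.HasEnoughColours κ)
    (hserial : ∀ x, ∃ y, F.rel x y) (a : F.QuotientWorld κ) :
    ∃ b, (F.quotient κ).rel a b := by
  obtain ⟨p, rfl⟩ := Quotient.exists_rep a
  obtain ⟨y, hy⟩ := hserial p.world
  obtain ⟨f, hf, -⟩ := hκ.exists_injective_precedes p (s := {y}) (by simpa using hy) (by simp)
  exact ⟨⟦f ⟨y, Finset.mem_singleton_self y⟩⟧, (hf _).2⟩

theorem pastTypes_quotient [IsTrans W F.rel] [Finite κ] (hκ : F.HasEnoughColours κ)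
    (p : F.ColouredWorld κ) : (F.quotient κ).pastTypes ⟦p⟧ = F.pastTypes p.world := by
  ext t
  constructor
  · rintro ⟨⟨q⟩, hq, rfl⟩
    exact hq.type_mem_pastTypes
  · rintro ⟨x, hx, rfl⟩
    obtain ⟨q, rfl, hq⟩ := hκ.exists_precedes_of_rel p hx
    exact ⟨⟦q⟧, hq, rfl⟩

theorem encard_successors_quotient_le {U : Set T}
    (hU : (F.successors U p.world).encard < F.bound) :
    ((F.quotient κ).successors U ⟦p⟧).encard ≤ (F.successors U p.world).encard := by
  let K : Set (F.ColouredWorld κ) := {l | KingStep p l ∧ F.type l.world ∈ U}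
  have hrare : ∀ t ∈ U, F.IsRare p.world t := fun t ht =>
    have hsub : F.successors {t} p.world ⊆ F.successors U p.world :=
      fun _ hy => ⟨hy.1, Set.singleton_subset_iff.2 ht hy.2⟩
    (Set.encard_le_encard hsub).trans_lt hU
  have hcover : (F.quotient κ).successors U ⟦p⟧ ⊆ (fun l => ⟦l⟧) '' K := by
    rintro ⟨q⟩ ⟨hpq, hq⟩
    obtain ⟨l, hl, hql⟩ := hpq.exists_kingStep .refl (hrare _ hq)
    exact ⟨l, ⟨hl, type_eq_of_equiv hql ▸ hq⟩, Quotient.sound hql.symm⟩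
  calc ((F.quotient κ).successors U ⟦p⟧).encard ≤ K.encard :=
        (Set.encard_le_encard hcover).trans (Set.encard_image_le _ _)
    _ ≤ (F.successors U p.world).encard :=
        Set.encard_le_encard_of_injOn (f := world) (fun l hl => ⟨hl.1.2.1, hl.2⟩)
          fun l hl m hm => ext_of_colour_eq (hl.1.1.trans hm.1.1.symm)

theorem le_encard_successors_quotient_iff [IsTrans W F.rel] [Finite κ]
    (hκ : F.HasEnoughColours κ) (p : F.ColouredWorld κ) (U : Set T) {n : ℕ} (hn : n ≤ F.bound) :
    n ≤ ((F.quotient κ).successors U ⟦p⟧).encard ↔ n ≤ (F.successors U p.world).encard := by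
  constructor
  · contrapose!
    intro h
    exact (encard_successors_quotient_le (h.trans_le (by exact_mod_cast hn))).trans_lt h
  · intro h
    obtain ⟨s, hs, hsn⟩ := Set.exists_subset_encard_eq h
    lift s to Finset W using Set.finite_of_encard_eq_coe hsn
    have hcard : s.card = n := by
      rw [Set.encard_coe_eq_coe_finsetCard] at hsn
      exact_mod_cast hsn
    obtain ⟨f, hf, hinj⟩ := hκ.exists_injective_precedes p (fun y hy => (hs hy).1) (by omega)
    have hrange : Set.range (fun y => ⟦f y⟧) ⊆ (F.quotient κ).successors U ⟦p⟧ := by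
      rintro _ ⟨y, rfl⟩
      exact ⟨(hf y).2, show F.type (f y).world ∈ U from (hf y).1 ▸ (hs y.2).2⟩
    calc (n : ℕ∞) = ENat.card s := by simp [hcard]
      _ ≤ (Set.range (fun y => (⟦f y⟧ : F.QuotientWorld κ))).encard := hinj.encard_range
      _ ≤ _ := Set.encard_le_encard hrange

end Quotient

end TypedFrame

namespace MF

/-- The subformulas of a formula. -/
def subformulas : MF → Set MF
  | .var i => {.var i}
  | .neg φ => insert (.neg φ) φ.subformulas
  | .and φ ψ => insert (.and φ ψ) (φ.subformulas ∪ ψ.subformulas)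
  | .dia n φ => insert (.dia n φ) φ.subformulas
  | .conv φ => insert (.conv φ) φ.subformulas

theorem finite_subformulas (φ : MF) : φ.subformulas.Finite := by
  induction φ with
  | var i => exact Set.finite_singleton _
  | neg φ ih => exact ih.insert _
  | and φ ψ ihφ ihψ => exact (ihφ.union ihψ).insert _
  | dia n φ ih => exact ih.insert _
  | conv φ ih => exact ih.insert _

theorem mem_subformulas_self (φ : MF) : φ ∈ φ.subformulas := by
  cases φ <;> simp [subformulas]

/-- The largest grade of a forward modality in a formula. -/
def maxGrade : MF → ℕ
  | .var _ => 0
  | .neg φ => φ.maxGrade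
  | .and φ ψ => max φ.maxGrade ψ.maxGrade
  | .dia n φ => max n φ.maxGrade
  | .conv φ => φ.maxGrade

end MF

section Sat

variable {W W' : Type*} {R : W → W → Prop} {R' : W' → W' → Prop} {V : ℕ → Set W}
  {V' : ℕ → Set W'}

theorem sat_dia_iff_le_encard {n : ℕ} {φ : MF} {x : W} :
    Sat R V (.dia n φ) x ↔ n ≤ {y | R x y ∧ Sat R V φ y}.encard := by
  constructor
  · rintro ⟨s, hn, hs⟩
    calc (n : ℕ∞) ≤ (s : Set W).encard := by
          rw [Set.encard_coe_eq_coe_finsetCard]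
          exact_mod_cast hn
      _ ≤ _ := Set.encard_le_encard hs
  · intro h
    obtain ⟨s, hs, hsn⟩ := Set.exists_subset_encard_eq h
    lift s to Finset W using Set.finite_of_encard_eq_coe hsn
    rw [Set.encard_coe_eq_coe_finsetCard] at hsn
    exact ⟨s, (Nat.cast_inj.1 hsn).ge, hs⟩

theorem sat_dia_iff_of_forall_sat_iff {T : Type*} {F : TypedFrame W T} {ψ : MF} {U : Set T}
    (hψ : ∀ y, Sat F.rel V ψ y ↔ F.type y ∈ U) {n : ℕ} {x : W} :
    Sat F.rel V (.dia n ψ) x ↔ n ≤ (F.successors U x).encard := by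
  simp only [sat_dia_iff_le_encard, hψ, TypedFrame.successors]

theorem sat_conv_iff_of_forall_sat_iff {T : Type*} {F : TypedFrame W T} {ψ : MF} {U : Set T}
    (hψ : ∀ y, Sat F.rel V ψ y ↔ F.type y ∈ U) {x : W} :
    Sat F.rel V (.conv ψ) x ↔ ∃ t ∈ F.pastTypes x, t ∈ U := by
  simp only [Sat, hψ, TypedFrame.pastTypes, Set.exists_mem_image, Set.mem_ofPred_eq]

theorem sat_iff_of_relIso (e : R ≃r R') (hV : ∀ i x, x ∈ V i ↔ e x ∈ V' i) (φ : MF) :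
    ∀ x, Sat R V φ x ↔ Sat R' V' φ (e x) := by
  induction φ with
  | var i => exact hV i
  | neg φ ih => exact fun x => not_congr (ih x)
  | and φ ψ ihφ ihψ => exact fun x => and_congr (ihφ x) (ihψ x)
  | dia n φ ih =>
    intro x
    have himage : e '' {y | R x y ∧ Sat R V φ y} = {z | R' (e x) z ∧ Sat R' V' φ z} := by
      ext z
      obtain ⟨y, rfl⟩ := e.surjective z
      simp [ih, e.map_rel_iff]
    rw [sat_dia_iff_le_encard, sat_dia_iff_le_encard, ← himage, e.injective.encard_image]
  | conv φ ih =>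
    intro x
    refine (exists_congr fun y => ?_).trans e.surjective.exists.symm
    rw [ih, e.map_rel_iff]

end Sat

section TruthLemma

variable {W : Type*} {R : W → W → Prop} {V : ℕ → Set W} {φ ψ : MF} {κ : Type*}

variable (R V φ) in
/-- The frame of a Kripke structure, each world being typed by the subformulas of `φ` that it
satisfies. -/
def typedFrame : TypedFrame W (Set φ.subformulas) where
  rel := R
  type x := {ψ | Sat R V ψ x}
  bound := φ.maxGrade

instance isTrans_typedFrame [hR : IsTrans W R] : IsTrans W (typedFrame R V φ).rel := hR

variable (R V φ κ) in
/-- The valuation that the quotient of `typedFrame R V φ` inherits from `V`. -/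
def quotientValuation (i : ℕ) : Set ((typedFrame R V φ).QuotientWorld κ) :=
  (fun p => ⟦p⟧) '' {p | p.world ∈ V i}

open TypedFrame ColouredWorld

theorem mk_mem_quotientValuation_iff {i : ℕ} (hi : .var i ∈ φ.subformulas)
    (p : (typedFrame R V φ).ColouredWorld κ) :
    ⟦p⟧ ∈ quotientValuation R V φ κ i ↔ p.world ∈ V i := by
  constructor
  · rintro ⟨q, hq, hqp⟩
    exact (Set.ext_iff.1 (type_eq_of_equiv (Quotient.exact hqp)) ⟨.var i, hi⟩).1 hq
  · exact fun hp => ⟨p, hp, rfl⟩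

theorem sat_quotient_iff [IsTrans W R] [Finite κ]
    (hκ : (typedFrame R V φ).HasEnoughColours κ) (hψ : ψ.subformulas ⊆ φ.subformulas)
    (hgrade : ψ.maxGrade ≤ φ.maxGrade) (p : (typedFrame R V φ).ColouredWorld κ) :
    Sat ((typedFrame R V φ).quotient κ).rel (quotientValuation R V φ κ) ψ ⟦p⟧ ↔
      Sat R V ψ p.world := by
  induction ψ generalizing p with
  | var i => exact mk_mem_quotientValuation_iff (hψ rfl) p
  | neg ψ ih => exact not_congr (ih ((Set.subset_insert _ _).trans hψ) hgrade p)
  | and ψ χ ihψ ihχ =>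
    have hsub := (Set.subset_insert _ _).trans hψ
    exact and_congr
      (ihψ (Set.subset_union_left.trans hsub) (le_of_max_le_left hgrade) p)
      (ihχ (Set.subset_union_right.trans hsub) (le_of_max_le_right hgrade) p)
  | dia n ψ ih =>
    have hsub := (Set.subset_insert _ _).trans hψ
    have hsat := ih hsub (le_of_max_le_right hgrade)
    exact (sat_dia_iff_of_forall_sat_iff (U := {t | ⟨ψ, hsub ψ.mem_subformulas_self⟩ ∈ t})
        (Quotient.ind hsat)).trans <|
      (le_encard_successors_quotient_iff hκ p _ (le_of_max_le_left hgrade)).trans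
        (sat_dia_iff_of_forall_sat_iff fun _ => Iff.rfl).symm
  | conv ψ ih =>
    have hsub := (Set.subset_insert _ _).trans hψ
    have hsat := ih hsub hgrade
    refine (sat_conv_iff_of_forall_sat_iff (U := {t | ⟨ψ, hsub ψ.mem_subformulas_self⟩ ∈ t})
      (Quotient.ind hsat)).trans ?_
    rw [pastTypes_quotient hκ]
    exact (sat_conv_iff_of_forall_sat_iff fun _ => Iff.rfl).symm

end TruthLemma

theorem exists_relIso_fin {W : Type*} [Finite W] (R : W → W → Prop) :
    ∃ (n : ℕ) (R' : Fin n → Fin n → Prop), Nonempty (R ≃r R') := by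
  obtain ⟨n, ⟨e⟩⟩ := Finite.exists_equiv_fin W
  exact ⟨n, e.symm ⁻¹'o R, ⟨(RelIso.preimage e.symm R).symm⟩⟩

theorem d4_local_finite_model_property_general {W : Type*} {R : W → W → Prop}
    (hR : ∀ x y z, R x y → R y z → R x z) {V : ℕ → Set W} {φ : MF} {x : W} (hx : Sat R V φ x) :
    ∃ (W' : Type) (R' : W' → W' → Prop) (V' : ℕ → Set W'),
      Finite W' ∧ ((∀ w, ∃ v, R w v) → ∀ w, ∃ v, R' w v) ∧
        (∀ x y z, R' x y → R' y z → R' x z) ∧ ∃ w, Sat R' V' φ w := by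
  have : IsTrans W R := ⟨hR⟩
  have : Finite φ.subformulas := φ.finite_subformulas.to_subtype
  obtain ⟨c, hc⟩ := (typedFrame R V φ).exists_hasEnoughColours
  obtain ⟨p, rfl⟩ := hc.exists_colouredWorld x
  obtain ⟨n, R', ⟨e⟩⟩ := exists_relIso_fin ((typedFrame R V φ).quotient (Fin c)).rel
  refine ⟨Fin n, R', fun i => e '' quotientValuation R V φ (Fin c) i, inferInstance,
    fun hserial => e.surjective.forall.2 fun a => ?_, ?_, e ⟦p⟧, ?_⟩
  · obtain ⟨b, hb⟩ := TypedFrame.serial_quotient hc hserial a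
    exact ⟨e b, e.map_rel_iff.2 hb⟩
  · exact e.symm.toRelEmbedding.isTrans.trans
  · rw [← sat_iff_of_relIso e fun i x => (e.injective.mem_set_image).symm]
    exact (sat_quotient_iff hc subset_rfl le_rfl p).2 hx

theorem d4_local_finite_model_property (φ : MF)
    (h : ∃ (W : Type v) (R : W → W → Prop) (V : ℕ → Set W),
      (∀ w : W, ∃ v : W, R w v) ∧ (∀ x y z : W, R x y → R y z → R x z) ∧
        (∃ w : W, Sat R V φ w)) :
    ∃ (W : Type) (R : W → W → Prop) (V : ℕ → Set W),
      Finite W ∧ (∀ w : W, ∃ v : W, R w v) ∧ (∀ x y z : W, R x y → R y z → R x z) ∧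
        (∃ w : W, Sat R V φ w) := by
  obtain ⟨W, R, V, hserial, htrans, x, hx⟩ := h
  obtain ⟨W', R', V', hfin, hserial', htrans', hsat⟩ :=
    d4_local_finite_model_property_general htrans hx
  exact ⟨W', R', V', hfin, hserial' hserial, htrans', hsat⟩
end
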